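/- Let H(a,b) = ζ(2,…,2,3,2,…,2) with a twos before the 3 and b twos after the 3, and let F(x,y) = ∑_{a,b≥0} (-1)^{a+b+1} H(a,b) x^{2a+2} y^{2b+1}. Then for all real x, y with |x| < 1 and 0 < |y| < 1, one has (π/sin(πy))·F(x,y) = (d/dz)|_{z=0} of z ↦ ₃F₂(x, −x, z; 1+y, 1−y; 1), i.e. the derivative at z = 0 of the function z ↦ ∑_{n=0}^∞ (x)_n(−x)_n(z)_n / (n! (1+y)_n (1−y)_n). -/

import Mathlib

open scoped BigOperators

/-- The multiple zeta value `ζ(k 0, …, k (n-1))`. -/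
noncomputable def mzv {n : ℕ} (k : Fin n → ℕ) : ℝ :=
  ∑' m : Fin n → ℕ+, if StrictMono m then ∏ i, (1 : ℝ) / ((m i : ℕ) : ℝ) ^ (k i) else 0

/-- `H a b = ζ(2,…,2,3,2,…,2)` with `a` twos before the `3` and `b` twos after. -/
noncomputable def Hmzv (a b : ℕ) : ℝ :=
  mzv (fun i : Fin (a + b + 1) => if (i : ℕ) = a then 3 else 2)

/-- The generating function `F(x,y) = ∑_{a,b≥0} (-1)^{a+b+1} H(a,b) x^{2a+2} y^{2b+1}`. -/
noncomputable def Fgen (x y : ℝ) : ℝ :=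
  ∑' a : ℕ, ∑' b : ℕ, (-1 : ℝ) ^ (a + b + 1) * Hmzv a b * x ^ (2 * a + 2) * y ^ (2 * b + 1)

/-- The ascending Pochhammer symbol `(x)_n`. -/
noncomputable def poch (x : ℝ) (n : ℕ) : ℝ := (ascPochhammer ℝ n).eval x

/-- The generalized hypergeometric series `₃F₂(a₁,a₂,a₃; b₁,b₂; 1)`. -/
noncomputable def F32 (a1 a2 a3 b1 b2 : ℝ) : ℝ :=
  ∑' n : ℕ, poch a1 n * poch a2 n * poch a3 n / ((n.factorial : ℝ) * poch b1 n * poch b2 n)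

open Filter Topology
open scoped Nat

/-!
A strictly increasing tuple in the series of `ζ(2,…,2,3,2,…,2)` is the entry `n` that carries the
exponent `3` together with two finite sets, the entries below `n` and those above it. Expanding
infinite products over finite sets therefore gives
`F(x,y) = -x² y ∑ₙ n⁻³ ∏_{m<n} (1 - x²/m²) ∏_{m>n} (1 - y²/m²)`,
and Euler's product for the sine turns `π / sin(πy)` times `y ∏_{m>n} (1 - y²/m²)` into
`1 / ∏_{m≤n} (1 - y²/m²)`. On the other side `(z)_n` has derivative `(n-1)!` at `z = 0`, and
`(x)_n (-x)_n / ((1+y)_n (1-y)_n)` is `-x²/n²` times the same ratio of partial Euler products, so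
differentiating the hypergeometric series term by term gives the same sum.
-/

section Pochhammer

lemma poch_zero (t : ℝ) : poch t 0 = 1 := by simp [poch]

lemma poch_succ (t : ℝ) (n : ℕ) : poch t (n + 1) = poch t n * (t + n) :=
  ascPochhammer_succ_eval n t

lemma poch_succ_left (t : ℝ) (n : ℕ) : poch t (n + 1) = t * poch (1 + t) n := by
  simp [poch, ascPochhammer_succ_left, add_comm]

lemma poch_one (n : ℕ) : poch 1 n = n ! := ascPochhammer_eval_one ℝ n

lemma abs_poch_one_add_le {z : ℝ} (hz : |z| ≤ 1) (n : ℕ) : |poch (1 + z) n| ≤ (n + 1)! := by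
  induction n with
  | zero => simp [poch_zero]
  | succ n ih =>
    have hfactor : |1 + z + n| ≤ n + 1 + 1 := by
      have := abs_le.mp hz
      rw [abs_le]
      constructor <;> linarith [n.cast_nonneg (α := ℝ)]
    rw [poch_succ, abs_mul, Nat.factorial_succ (n + 1), mul_comm]
    push_cast
    gcongr

lemma hasDerivAt_const_add_id_mul {G : ℝ → ℝ} (c : ℝ) (hG : ContinuousAt G 0) :
    HasDerivAt (fun z => c + z * G z) (G 0) 0 := by
  rw [hasDerivAt_iff_tendsto_slope]
  refine (hG.tendsto.mono_left nhdsWithin_le_nhds).congr' ?_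
  filter_upwards [self_mem_nhdsWithin] with z (hz : z ≠ 0)
  simp [slope_def_field, hz]

/-- Each `(z)_n` with `n ≥ 1` vanishes at `0` with derivative `(n - 1)!`, so the series is
`c 0 + z * G z` with `G` continuous at `0`. -/
lemma hasDerivAt_tsum_mul_poch_zero {c : ℕ → ℝ} (hc : Summable fun n : ℕ => ‖c n * (n ! : ℝ)‖) :
    HasDerivAt (fun z => ∑' n, c n * poch z n) (∑' n, c (n + 1) * n !) 0 := by
  set G : ℝ → ℝ := fun z => ∑' n, c (n + 1) * poch (1 + z) n with hG
  have hmajorant : Summable fun n => ‖c (n + 1) * (n + 1)!‖ :=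
    (summable_nat_add_iff (f := fun n : ℕ => ‖c n * (n ! : ℝ)‖) 1).mpr hc
  have hbound (n : ℕ) (z : ℝ) (hz : z ∈ Metric.ball 0 1) :
      ‖c (n + 1) * poch (1 + z) n‖ ≤ ‖c (n + 1) * (n + 1)!‖ := by
    have hz : |z| ≤ 1 := by simpa using (Metric.mem_ball.mp hz).le
    rw [norm_mul, norm_mul, Real.norm_natCast]
    gcongr
    exact abs_poch_one_add_le hz n
  have hcont : ContinuousAt G 0 := by
    refine (continuousOn_tsum (fun n => ?_) hmajorant hbound).continuousAt
      (Metric.ball_mem_nhds 0 one_pos)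
    have hpoch : Continuous (poch · n) := (ascPochhammer ℝ n).continuous
    exact (continuous_const.mul (hpoch.comp (continuous_const_add 1))).continuousOn
  have hG0 : G 0 = ∑' n, c (n + 1) * n ! := by simp only [hG, add_zero, poch_one]
  rw [← hG0]
  refine (hasDerivAt_const_add_id_mul (c 0) hcont).congr_of_eventuallyEq ?_
  filter_upwards [Metric.ball_mem_nhds (0 : ℝ) one_pos] with z hz
  have hterm (n : ℕ) : c (n + 1) * poch z (n + 1) = z * (c (n + 1) * poch (1 + z) n) := by
    rw [poch_succ_left]; ring
  have htail : Summable fun n => c (n + 1) * poch z (n + 1) := by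
    simp_rw [hterm]
    exact (hmajorant.of_norm_bounded (hbound · z hz)).mul_left z
  have hsummable := (summable_nat_add_iff (f := fun n => c n * poch z n) 1).mp htail
  rw [hsummable.tsum_eq_zero_add, poch_zero, mul_one]
  simp_rw [hterm, tsum_mul_left, hG]

end Pochhammer

section EulerProduct

/-- The `j`-th term `-t² / (j + 1)²` of Euler's product `∏ (1 - t² / (j + 1)²) = sin (π t) / (π t)`,
indexed from `j = 0`. -/
noncomputable def realSineTerm (t : ℝ) (j : ℕ) : ℝ := -t ^ 2 / (j + 1) ^ 2

/-- The product of the first `n` factors of Euler's product for `sin (π t) / (π t)`. -/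
noncomputable def partialSineProd (t : ℝ) (n : ℕ) : ℝ :=
  ∏ j ∈ Finset.range n, (1 + realSineTerm t j)

lemma summable_norm_realSineTerm (t : ℝ) : Summable fun j => ‖realSineTerm t j‖ := by
  have h := summable_pow_div_add (t ^ 2) 2 1 Nat.one_lt_two
  simpa [realSineTerm] using h

lemma multipliable_one_add_realSineTerm (t : ℝ) : Multipliable fun j => 1 + realSineTerm t j :=
  multipliable_one_add_of_summable (summable_norm_realSineTerm t)

lemma tendsto_partialSineProd (t : ℝ) :
    Tendsto (partialSineProd t) atTop (𝓝 (∏' j, (1 + realSineTerm t j))) :=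
  (multipliable_one_add_realSineTerm t).hasProd.tendsto_prod_nat

lemma pi_mul_mul_tprod_one_add_realSineTerm (t : ℝ) :
    Real.pi * t * ∏' j, (1 + realSineTerm t j) = Real.sin (Real.pi * t) := by
  refine tendsto_nhds_unique ((tendsto_partialSineProd t).const_mul _)
    ((Real.tendsto_euler_sin_prod t).congr fun n => ?_)
  simp only [partialSineProd, realSineTerm, neg_div, ← sub_eq_add_neg]

lemma sin_pi_mul_ne_zero_of_forall_int_ne {t : ℝ} (ht : ∀ k : ℤ, (k : ℝ) ≠ t) :
    Real.sin (Real.pi * t) ≠ 0 := by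
  rw [Real.sin_ne_zero_iff]
  intro k hk
  rw [mul_comm] at hk
  exact ht k (mul_left_cancel₀ Real.pi_ne_zero hk)

lemma tprod_one_add_realSineTerm_ne_zero {t : ℝ} (ht : ∀ k : ℤ, (k : ℝ) ≠ t) :
    ∏' j, (1 + realSineTerm t j) ≠ 0 := by
  refine right_ne_zero_of_mul (a := Real.pi * t) ?_
  rw [pi_mul_mul_tprod_one_add_realSineTerm]
  exact sin_pi_mul_ne_zero_of_forall_int_ne ht

lemma tprod_Iio_one_add_realSineTerm (t : ℝ) (n : ℕ) :
    ∏' j : Set.Iio n, (1 + realSineTerm t j) = partialSineProd t n := by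
  rw [partialSineProd, ← Finset.tprod_subtype', Finset.coe_range]

lemma partialSineProd_succ_mul_tprod_Ioi (t : ℝ) (n : ℕ) :
    partialSineProd t (n + 1) * ∏' j : Set.Ioi n, (1 + realSineTerm t j) =
      ∏' j, (1 + realSineTerm t j) := by
  have hmultipliable (s : Set ℕ) :
      Multipliable ((fun j => 1 + realSineTerm t j) ∘ (↑) : s → ℝ) :=
    multipliable_one_add_of_summable ((summable_norm_realSineTerm t).subtype s)
  have h := (hmultipliable (Set.Iic n)).tprod_mul_tprod_compl (hmultipliable (Set.Iic n)ᶜ)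
  rwa [Set.compl_Iic, ← Set.Iio_add_one_eq_Iic, tprod_Iio_one_add_realSineTerm] at h

lemma pi_div_sin_mul_mul_tprod_Ioi {y : ℝ} (hy : ∀ k : ℤ, (k : ℝ) ≠ y) (n : ℕ) :
    Real.pi / Real.sin (Real.pi * y) * (y * ∏' t : Set.Ioi n, (1 + realSineTerm y t)) =
      1 / partialSineProd y (n + 1) := by
  have hprod := partialSineProd_succ_mul_tprod_Ioi y n
  have hpartial : partialSineProd y (n + 1) ≠ 0 :=
    left_ne_zero_of_mul (hprod.trans_ne (tprod_one_add_realSineTerm_ne_zero hy))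
  rw [div_mul_eq_mul_div, div_eq_div_iff (sin_pi_mul_ne_zero_of_forall_int_ne hy) hpartial,
    ← pi_mul_mul_tprod_one_add_realSineTerm, ← hprod]
  ring

lemma poch_one_add_mul_poch_one_sub (t : ℝ) (n : ℕ) :
    poch (1 + t) n * poch (1 - t) n = (n ! : ℝ) ^ 2 * partialSineProd t n := by
  induction n with
  | zero => simp [poch_zero, partialSineProd]
  | succ n ih =>
    calc poch (1 + t) (n + 1) * poch (1 - t) (n + 1)
        = poch (1 + t) n * poch (1 - t) n * ((1 + t + n) * (1 - t + n)) := by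
          rw [poch_succ, poch_succ]; ring
      _ = ((n + 1)! : ℝ) ^ 2 * partialSineProd t (n + 1) := by
          rw [ih, partialSineProd, partialSineProd, Finset.prod_range_succ, Nat.factorial_succ,
            realSineTerm]
          push_cast
          field_simp
          ring

lemma poch_succ_mul_poch_neg_succ (t : ℝ) (n : ℕ) :
    poch t (n + 1) * poch (-t) (n + 1) = -t ^ 2 * ((n ! : ℝ) ^ 2 * partialSineProd t n) := by
  rw [poch_succ_left, poch_succ_left, ← poch_one_add_mul_poch_one_sub, ← sub_eq_add_neg]
  ring

end EulerProduct

section HypergeometricDerivative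

/-- The coefficient of `(z)_n` in `₃F₂(x, -x, z; 1 + y, 1 - y; 1)`. -/
noncomputable def F32Coeff (x y : ℝ) (n : ℕ) : ℝ :=
  poch x n * poch (-x) n / (n ! * poch (1 + y) n * poch (1 - y) n)

lemma F32_eq_tsum_F32Coeff_mul_poch (x y z : ℝ) :
    F32 x (-x) z (1 + y) (1 - y) = ∑' n, F32Coeff x y n * poch z n :=
  tsum_congr fun _ => mul_div_right_comm _ _ _

lemma F32Coeff_succ_mul_factorial_succ (x y : ℝ) (n : ℕ) :
    F32Coeff x y (n + 1) * (n + 1)! =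
      realSineTerm x n * (partialSineProd x n / partialSineProd y (n + 1)) := by
  rw [F32Coeff, mul_assoc, poch_one_add_mul_poch_one_sub, poch_succ_mul_poch_neg_succ,
    realSineTerm, Nat.factorial_succ]
  push_cast
  field_simp

lemma F32Coeff_succ_mul_factorial (x y : ℝ) (n : ℕ) :
    F32Coeff x y (n + 1) * n ! =
      -x ^ 2 / (n + 1) ^ 3 * (partialSineProd x n / partialSineProd y (n + 1)) := by
  have h := F32Coeff_succ_mul_factorial_succ x y n
  rw [realSineTerm, Nat.factorial_succ] at h
  push_cast at h
  rw [pow_succ _ 2, ← div_div, div_mul_eq_mul_div, eq_div_iff (by positivity), ← h]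
  ring

lemma summable_norm_F32Coeff_mul_factorial (x : ℝ) {y : ℝ} (hy : ∀ k : ℤ, (k : ℝ) ≠ y) :
    Summable fun n : ℕ => ‖F32Coeff x y n * (n ! : ℝ)‖ := by
  have hratio : Tendsto (fun n => partialSineProd x n / partialSineProd y (n + 1)) atTop
      (𝓝 ((∏' j, (1 + realSineTerm x j)) / ∏' j, (1 + realSineTerm y j))) :=
    (tendsto_partialSineProd x).div ((tendsto_add_atTop_iff_nat 1).mpr (tendsto_partialSineProd y))
      (tprod_one_add_realSineTerm_ne_zero hy)
  have htail : Summable fun n => ‖F32Coeff x y (n + 1) * (n + 1)!‖ := by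
    simp_rw [F32Coeff_succ_mul_factorial_succ]
    rw [← Nat.cofinite_eq_atTop] at hratio
    exact ((summable_norm_realSineTerm x).mul_tendsto_const hratio).norm
  exact (summable_nat_add_iff (f := fun n : ℕ => ‖F32Coeff x y n * (n ! : ℝ)‖) 1).mp htail

lemma hasDerivAt_F32 (x : ℝ) {y : ℝ} (hy : ∀ k : ℤ, (k : ℝ) ≠ y) :
    HasDerivAt (fun z => F32 x (-x) z (1 + y) (1 - y))
      (∑' n : ℕ, -x ^ 2 / (n + 1) ^ 3 * (partialSineProd x n / partialSineProd y (n + 1))) 0 := by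
  simp_rw [F32_eq_tsum_F32Coeff_mul_poch, ← F32Coeff_succ_mul_factorial]
  exact hasDerivAt_tsum_mul_poch_zero (summable_norm_F32Coeff_mul_factorial x hy)

end HypergeometricDerivative

section SubsetProducts

variable {α R : Type*} [NormedCommRing R] [NormOneClass R]

lemma summable_norm_prod_indicator {f : α → R} (hf : Summable fun i => ‖f i‖) (s : Set α) :
    Summable fun S : Finset α => ‖∏ i ∈ S, s.indicator f i‖ := by
  have hindicator : Summable fun i => ‖s.indicator f i‖ :=
    hf.of_nonneg_of_le (fun _ => norm_nonneg _) (norm_indicator_le_norm_self f)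
  exact (summable_finsetProd_of_summable_nonneg (fun _ => norm_nonneg _) hindicator).of_nonneg_of_le
    (fun _ => norm_nonneg _) fun S => S.norm_prod_le _

lemma tsum_prod_indicator [CompleteSpace R] {f : α → R} (hf : Summable fun i => ‖f i‖)
    (s : Set α) :
    ∑' S : Finset α, ∏ i ∈ S, s.indicator f i = ∏' i : s, (1 + f i) := by
  classical
  rw [← tprod_one_add (summable_norm_prod_indicator hf s).of_norm, tprod_subtype s fun i => 1 + f i]
  refine tprod_congr fun i => ?_
  by_cases hi : i ∈ s <;> simp [hi]

end SubsetProducts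

section SplitTuples

open Finset

lemma prod_Iio_mul_mul_prod_Ioi {ι M : Type*} [LinearOrder ι] [Fintype ι]
    [LocallyFiniteOrderBot ι] [LocallyFiniteOrderTop ι] [CommMonoid M] (i : ι) (F : ι → M) :
    (∏ j ∈ Iio i, F j) * F i * ∏ j ∈ Ioi i, F j = ∏ j, F j := by
  rw [Fintype.prod_eq_mul_prod_compl i, ← Ioi_disjUnion_Iio, prod_disjUnion, mul_right_comm,
    mul_comm, mul_comm (∏ j ∈ Iio i, F j), mul_left_comm]

/-- The index of the entry of a tuple of length `a + b + 1` that is preceded by `a` entries and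
followed by `b` entries. -/
def pivot (a b : ℕ) : Fin (a + b + 1) := ⟨a, by omega⟩

lemma card_Iio_pivot (a b : ℕ) : #(Iio (pivot a b)) = a := Fin.card_Iio _

lemma card_Ioi_pivot (a b : ℕ) : #(Ioi (pivot a b)) = b := by
  rw [Fin.card_Ioi]
  exact Nat.sub_eq_of_eq_add (by simp only [pivot]; omega)

variable {α : Type*} [LinearOrder α]

/-- A tuple cut at its `i`-th entry: that entry, the set of the entries before it, and the set of
the entries after it. -/
def splitAt {k : ℕ} (i : Fin k) (m : Fin k → α) : α × Finset α × Finset α :=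
  (m i, (Iio i).image m, (Ioi i).image m)

lemma splitAt_injOn_strictMono {k : ℕ} (i : Fin k) :
    Set.InjOn (splitAt (α := α) i) {m | StrictMono m} := by
  have hrange (m : Fin k → α) :
      Set.range m = insert (splitAt i m).1 ((splitAt i m).2.1 ∪ (splitAt i m).2.2 : Set α) := by
    ext x
    simp only [splitAt, coe_image, coe_Iio, coe_Ioi, Set.mem_range, Set.mem_insert_iff,
      Set.mem_union, Set.mem_image, Set.mem_Iio, Set.mem_Ioi]
    constructor
    · rintro ⟨j, rfl⟩
      rcases lt_trichotomy j i with h | rfl | h <;> grind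
    · grind
  intro m hm m' hm' h
  rw [← hm.range_inj hm', hrange, hrange, h]

lemma exists_strictMono_splitAt_eq {n : α} {S T : Finset α} (hS : ∀ s ∈ S, s < n)
    (hT : ∀ t ∈ T, n < t) :
    ∃ m : Fin (#S + #T + 1) → α, StrictMono m ∧ splitAt (pivot #S #T) m = (n, S, T) := by
  set U := insert n (S ∪ T)
  have hcard : #U = #S + #T + 1 := by
    rw [card_insert_of_notMem (by grind), card_union_of_disjoint]
    rw [disjoint_left]
    exact fun s hs ht => (hS s hs).asymm (hT s ht)
  set m := U.orderEmbOfFin hcard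
  have hmem (x : α) : (∃ j, m j = x) ↔ x ∈ U := by
    rw [← Set.mem_range, range_orderEmbOfFin, mem_coe]
  obtain ⟨i, hi⟩ := (hmem n).mpr (mem_insert_self _ _)
  have hIio : (Iio i).image m = S := by
    ext x
    have hx : x ∈ (Iio i).image m ↔ x ∈ U ∧ x < n := by
      rw [← hmem, ← hi]
      simp only [mem_image, mem_Iio]
      grind [m.lt_iff_lt]
    grind
  have hIoi : (Ioi i).image m = T := by
    ext x
    have hx : x ∈ (Ioi i).image m ↔ x ∈ U ∧ n < x := by
      rw [← hmem, ← hi]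
      simp only [mem_image, mem_Ioi]
      grind [m.lt_iff_lt]
    grind
  have hpivot : i = pivot #S #T := by
    rw [Fin.ext_iff, ← Fin.card_Iio, ← card_image_of_injective _ m.injective, hIio, pivot]
  exact ⟨m, m.strictMono, by rw [← hpivot, splitAt, hi, hIio, hIoi]⟩

section Weight

variable {R : Type*} [CommSemiring R]

/-- The weight `g n * ∏ f s * ∏ h t` of an entry `n` preceded by the entries `s ∈ S` and followed
by the entries `t ∈ T`; it is zero unless `S` lies below `n` and `T` above `n`. -/
noncomputable def tripleWeight (f g h : α → R) (p : α × Finset α × Finset α) : R :=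
  g p.1 * ((∏ s ∈ p.2.1, (Set.Iio p.1).indicator f s) * ∏ t ∈ p.2.2, (Set.Ioi p.1).indicator h t)

lemma tripleWeight_splitAt (f g h : α → R) {k : ℕ} (i : Fin k) {m : Fin k → α}
    (hm : StrictMono m) :
    tripleWeight f g h (splitAt i m) =
      (∏ j ∈ Iio i, f (m j)) * g (m i) * ∏ j ∈ Ioi i, h (m j) := by
  have hIio : ∏ s ∈ (Iio i).image m, (Set.Iio (m i)).indicator f s = ∏ j ∈ Iio i, f (m j) := by
    rw [prod_image hm.injective.injOn]
    exact prod_congr rfl fun j hj => Set.indicator_of_mem (Set.mem_Iio.mpr (hm (mem_Iio.mp hj))) f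
  have hIoi : ∏ t ∈ (Ioi i).image m, (Set.Ioi (m i)).indicator h t = ∏ j ∈ Ioi i, h (m j) := by
    rw [prod_image hm.injective.injOn]
    exact prod_congr rfl fun j hj => Set.indicator_of_mem (hm (mem_Ioi.mp hj)) h
  simp only [tripleWeight, splitAt, hIio, hIoi]
  ring

lemma lt_of_tripleWeight_ne_zero {f g h : α → R} {p : α × Finset α × Finset α}
    (hp : tripleWeight f g h p ≠ 0) : (∀ s ∈ p.2.1, s < p.1) ∧ ∀ t ∈ p.2.2, p.1 < t := by
  have hp' := right_ne_zero_of_mul hp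
  constructor <;> intro x hx
  · by_contra hlt
    exact left_ne_zero_of_mul hp'
      (prod_eq_zero hx (Set.indicator_of_notMem (by simpa using hlt) f))
  · by_contra hlt
    exact right_ne_zero_of_mul hp'
      (prod_eq_zero hx (Set.indicator_of_notMem (by simpa using hlt) h))

lemma card_splitAt_pivot {a b : ℕ} {m : Fin (a + b + 1) → α} (hm : StrictMono m) :
    (#(splitAt (pivot a b) m).2.1, #(splitAt (pivot a b) m).2.2) = (a, b) := by
  simp only [splitAt, card_image_of_injective _ hm.injective, card_Iio_pivot, card_Ioi_pivot]

lemma tsum_tripleWeight_card_eq [TopologicalSpace R] (f g h : α → R) (a b : ℕ) :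
    ∑' p : (fun p : α × Finset α × Finset α => (#p.2.1, #p.2.2)) ⁻¹' {(a, b)},
        tripleWeight f g h p =
      ∑' m : Fin (a + b + 1) → α, if StrictMono m then
        (∏ j ∈ Iio (pivot a b), f (m j)) * g (m (pivot a b)) * ∏ j ∈ Ioi (pivot a b), h (m j)
      else 0 := by
  set fiber : Set (α × Finset α × Finset α) := (fun p => (#p.2.1, #p.2.2)) ⁻¹' {(a, b)}
  set split : {m : Fin (a + b + 1) → α | StrictMono m} → α × Finset α × Finset α :=
    fun m => splitAt (pivot a b) m
  have hinj : split.Injective := (splitAt_injOn_strictMono (pivot a b)).injective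
  have hmem (m) : split m ∈ fiber := card_splitAt_pivot m.2
  have hsupp : Function.support (fiber.indicator (tripleWeight f g h)) ⊆ Set.range split := by
    rintro ⟨n, S, T⟩ hp
    obtain ⟨hcard, hne⟩ := Set.indicator_apply_ne_zero.mp hp
    obtain ⟨rfl, rfl⟩ := Prod.mk.inj hcard
    obtain ⟨hS, hT⟩ := lt_of_tripleWeight_ne_zero hne
    obtain ⟨m, hm, hmp⟩ := exists_strictMono_splitAt_eq hS hT
    exact ⟨⟨m, hm⟩, hmp⟩
  calc ∑' p : fiber, tripleWeight f g h p
      = ∑' p, fiber.indicator (tripleWeight f g h) p := tsum_subtype _ _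
    _ = ∑' m, tripleWeight f g h (split m) := by
        rw [← hinj.tsum_eq hsupp]
        exact tsum_congr fun m => Set.indicator_of_mem (hmem m) _
    _ = ∑' m, {m | StrictMono m}.indicator
          (fun m => tripleWeight f g h (splitAt (pivot a b) m)) m :=
        tsum_subtype {m | StrictMono m} fun m => tripleWeight f g h (splitAt (pivot a b) m)
    _ = _ := tsum_congr fun m => by
        rw [Set.indicator_apply]
        exact if_ctx_congr Iff.rfl (tripleWeight_splitAt f g h _) fun _ => rfl

end Weight

variable {R : Type*} [NormedCommRing R] [NormOneClass R] [CompleteSpace R]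

lemma summable_tripleWeight {f g h : α → R} (hf : Summable fun i => ‖f i‖)
    (hg : Summable fun i => ‖g i‖) (hh : Summable fun i => ‖h i‖) :
    Summable (tripleWeight f g h) := by
  let P (f : α → R) (S : Finset α) : ℝ := ∏ s ∈ S, ‖f s‖
  have hP0 (f : α → R) : 0 ≤ P f := fun _ => prod_nonneg fun _ _ => norm_nonneg _
  have hP {f : α → R} (hf : Summable fun i => ‖f i‖) : Summable (P f) :=
    summable_finsetProd_of_summable_nonneg (fun _ => norm_nonneg _) hf
  have hmajorant := hg.mul_of_nonneg ((hP hf).mul_of_nonneg (hP hh) (hP0 f) (hP0 h))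
    (fun n => norm_nonneg (g n)) fun q => mul_nonneg (hP0 f q.1) (hP0 h q.2)
  have hnorm {f : α → R} (s : Set α) (S : Finset α) :
      ‖∏ i ∈ S, s.indicator f i‖ ≤ P f S :=
    (S.norm_prod_le _).trans
      (prod_le_prod (fun _ _ => norm_nonneg _) fun i _ => norm_indicator_le_norm_self f i)
  have hbound (p) : ‖tripleWeight f g h p‖ ≤ ‖g p.1‖ * (P f p.2.1 * P h p.2.2) := calc
    _ ≤ ‖g p.1‖ * (‖∏ s ∈ p.2.1, (Set.Iio p.1).indicator f s‖ *
          ‖∏ t ∈ p.2.2, (Set.Ioi p.1).indicator h t‖) :=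
        norm_mul_le_of_le le_rfl (norm_mul_le _ _)
    _ ≤ ‖g p.1‖ * (P f p.2.1 * P h p.2.2) := by
        gcongr
        exacts [hnorm _ _, hnorm _ _]
  exact hmajorant.of_norm_bounded hbound

lemma tsum_tripleWeight {f g h : α → R} (hf : Summable fun i => ‖f i‖)
    (hg : Summable fun i => ‖g i‖) (hh : Summable fun i => ‖h i‖) :
    ∑' p, tripleWeight f g h p =
      ∑' n, g n * ((∏' s : Set.Iio n, (1 + f s)) * ∏' t : Set.Ioi n, (1 + h t)) := by
  rw [(summable_tripleWeight hf hg hh).tsum_prod]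
  refine tsum_congr fun n => ?_
  have hbefore := summable_norm_prod_indicator hf (Set.Iio n)
  have hafter := summable_norm_prod_indicator hh (Set.Ioi n)
  simp only [tripleWeight]
  rw [← tsum_prod_indicator hf, ← tsum_prod_indicator hh,
    tsum_mul_tsum_of_summable_norm hbefore hafter,
    (summable_mul_of_summable_norm hbefore hafter).tsum_mul_left]

theorem hasSum_tsum_strictMono {f g h : α → R} (hf : Summable fun i => ‖f i‖)
    (hg : Summable fun i => ‖g i‖) (hh : Summable fun i => ‖h i‖) :
    HasSum (fun p : ℕ × ℕ => ∑' m : Fin (p.1 + p.2 + 1) → α, if StrictMono m then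
        (∏ j ∈ Iio (pivot p.1 p.2), f (m j)) * g (m (pivot p.1 p.2)) *
          ∏ j ∈ Ioi (pivot p.1 p.2), h (m j)
      else 0)
      (∑' n, g n * ((∏' s : Set.Iio n, (1 + f s)) * ∏' t : Set.Ioi n, (1 + h t))) := by
  rw [← tsum_tripleWeight hf hg hh]
  simp_rw [← tsum_tripleWeight_card_eq]
  exact (summable_tripleWeight hf hg hh).hasSum.tsum_fiberwise _

end SplitTuples

section GeneratingFunction

lemma mzv_eq_tsum_nat {n : ℕ} (k : Fin n → ℕ) :
    mzv k = ∑' m : Fin n → ℕ, if StrictMono m then ∏ i, 1 / ((m i : ℝ) + 1) ^ k i else 0 := by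
  rw [mzv, ← ((Equiv.refl (Fin n)).arrowCongr Equiv.pnatEquivNat.symm).tsum_eq]
  refine tsum_congr fun m => if_congr ?_ ?_ rfl
  · exact forall₃_congr fun _ _ _ => OrderIso.pnatIsoNat.symm.lt_iff_lt
  · simp

lemma neg_sq_pow_card_mul_prod {ι : Type*} (t : ℝ) (s : Finset ι) (m : ι → ℕ) :
    (-t ^ 2) ^ s.card * ∏ i ∈ s, 1 / ((m i : ℝ) + 1) ^ 2 = ∏ i ∈ s, realSineTerm t (m i) := by
  simp_rw [Finset.pow_card_mul_prod, mul_one_div, realSineTerm]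

lemma prod_one_div_pow_ite_pivot {a b : ℕ} (m : Fin (a + b + 1) → ℕ) :
    ∏ i, 1 / ((m i : ℝ) + 1) ^ (if (i : ℕ) = a then 3 else 2) =
      (∏ j ∈ Finset.Iio (pivot a b), 1 / ((m j : ℝ) + 1) ^ 2) *
        (1 / ((m (pivot a b) : ℝ) + 1) ^ 3) *
        ∏ j ∈ Finset.Ioi (pivot a b), 1 / ((m j : ℝ) + 1) ^ 2 := by
  have hpivot (i : Fin (a + b + 1)) : (i : ℕ) = a ↔ i = pivot a b :=
    (Fin.ext_iff (b := pivot a b)).symm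
  simp_rw [hpivot]
  rw [← prod_Iio_mul_mul_prod_Ioi (pivot a b), if_pos rfl]
  congr 1
  · congr 1
    refine Finset.prod_congr rfl fun j hj => ?_
    rw [if_neg (Finset.mem_Iio.mp hj).ne]
  · refine Finset.prod_congr rfl fun j hj => ?_
    rw [if_neg (Finset.mem_Ioi.mp hj).ne']

lemma neg_sq_pow_mul_Hmzv (x y : ℝ) (a b : ℕ) :
    (-x ^ 2) ^ a * (-y ^ 2) ^ b * Hmzv a b =
      ∑' m : Fin (a + b + 1) → ℕ, if StrictMono m then
        (∏ j ∈ Finset.Iio (pivot a b), realSineTerm x (m j)) * (1 / ((m (pivot a b) : ℝ) + 1) ^ 3) *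
          ∏ j ∈ Finset.Ioi (pivot a b), realSineTerm y (m j)
      else 0 := by
  rw [Hmzv, mzv_eq_tsum_nat, ← tsum_mul_left]
  refine tsum_congr fun m => ?_
  rw [mul_ite, mul_zero, prod_one_div_pow_ite_pivot, ← neg_sq_pow_card_mul_prod,
    ← neg_sq_pow_card_mul_prod, card_Iio_pivot, card_Ioi_pivot]
  congr 1
  ring

lemma Fgen_eq_tsum (x y : ℝ) :
    Fgen x y = -x ^ 2 * y * ∑' n : ℕ, 1 / ((n : ℝ) + 1) ^ 3 *
      (partialSineProd x n * ∏' t : Set.Ioi n, (1 + realSineTerm y t)) := by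
  have hcube : Summable fun n : ℕ => ‖1 / ((n : ℝ) + 1) ^ 3‖ := by
    simpa using summable_pow_div_add (1 : ℝ) 3 1 (by norm_num)
  have hsum := hasSum_tsum_strictMono (summable_norm_realSineTerm x) hcube
    (summable_norm_realSineTerm y)
  simp only [← neg_sq_pow_mul_Hmzv, tprod_Iio_one_add_realSineTerm] at hsum
  rw [← hsum.tsum_eq, ← tsum_mul_left, (hsum.summable.mul_left _).tsum_prod, Fgen]
  refine tsum_congr fun a => tsum_congr fun b => ?_
  ring

end GeneratingFunction

theorem Fgen_eq_deriv_F32_general (x : ℝ) {y : ℝ} (hy : ∀ k : ℤ, (k : ℝ) ≠ y) :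
    HasDerivAt (fun z => F32 x (-x) z (1 + y) (1 - y))
      (Real.pi / Real.sin (Real.pi * y) * Fgen x y) 0 := by
  refine (hasDerivAt_F32 x hy).congr_deriv ?_
  rw [Fgen_eq_tsum, ← tsum_mul_left, ← tsum_mul_left]
  refine tsum_congr fun n => ?_
  rw [div_eq_mul_one_div (partialSineProd x n), ← pi_div_sin_mul_mul_tprod_Ioi hy]
  ring

theorem Fgen_eq_deriv_F32 (x y : ℝ) (hx : |x| < 1) (hy0 : 0 < |y|) (hy1 : |y| < 1) :
    Real.pi / Real.sin (Real.pi * y) * Fgen x y =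
      deriv (fun z : ℝ => F32 x (-x) z (1 + y) (1 - y)) 0 := by
  refine (Fgen_eq_deriv_F32_general x ?_).deriv.symm
  rintro k rfl
  rw [← Int.cast_abs, ← Int.cast_one, Int.cast_lt] at hy1
  rw [← Int.cast_abs, Int.cast_pos] at hy0
  omega
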